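/- arXiv:2209.13259 — 2 statements merged into one kernel-verified Lean document; each statement's English description precedes it below -/
import Mathlib

section
/- Let λ₁, λ₂, μ_t, μ_c be real numbers with 0 < λ₁ < μ_t, λ₂ ≥ 0 and λ₁ + λ₂ < μ_c. Then ∫₀^∞ (1/μ_t + y − (1 − exp(−(μ_t−λ₁)y))/(μ_t−λ₁)) · λ₁·exp(−λ₁ y)·(1 − exp(−(μ_c−λ₁−λ₂)y)) · ((μ_c−λ₂)/(μ_c−λ₁−λ₂)) dy = 1/λ₁ + 1/(μ_c−λ₂) − λ₁/(μ_t(μ_t+μ_c−λ₁−λ₂)). -/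
open MeasureTheory Real Set

/-!
The conditional density of the inter-departure time `D` is the hypoexponential density with rates
`r = λ₁` and `s = μ_c - λ₂`, i.e. that of a sum of two independent exponential variables. Hence `D`
has mean `1 / r + 1 / s` and Laplace transform `d ↦ r * s / ((d + r) * (d + s))`. Since
`E[X | D]` is a linear combination of `1`, `D` and `exp (-(d * D))` with `d = μ_t - λ₁`, its mean
follows.
-/

lemma exp_neg_mul_mul_exp_neg_mul (a b y : ℝ) :
    exp (-(a * y)) * exp (-(b * y)) = exp (-((a + b) * y)) := by
  rw [← exp_add]
  ring_nf

section ExponentialIntegrals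

variable {b : ℝ}

lemma integrableOn_exp_neg_mul_Ioi_zero (hb : 0 < b) :
    IntegrableOn (fun y ↦ exp (-(b * y))) (Ioi 0) := by
  simpa only [neg_mul] using integrableOn_exp_mul_Ioi (neg_lt_zero.mpr hb) 0

lemma integral_exp_neg_mul_Ioi_zero (hb : 0 < b) :
    ∫ y in Ioi (0 : ℝ), exp (-(b * y)) = 1 / b := by
  simpa [neg_div_neg_eq] using integral_exp_mul_Ioi (neg_lt_zero.mpr hb) 0

lemma integrableOn_id_mul_exp_neg_mul_Ioi_zero (hb : 0 < b) :
    IntegrableOn (fun y ↦ y * exp (-(b * y))) (Ioi 0) := by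
  simpa using integrableOn_rpow_mul_exp_neg_mul_rpow (p := 1) (s := 1) (by norm_num) one_pos hb

lemma integral_id_mul_exp_neg_mul_Ioi_zero (hb : 0 < b) :
    ∫ y in Ioi (0 : ℝ), y * exp (-(b * y)) = 1 / b ^ 2 := by
  have h_two : (2 : ℝ) - 1 = 1 := by norm_num
  simpa [h_two] using integral_rpow_mul_exp_neg_mul_Ioi two_pos hb

end ExponentialIntegrals

/-- The density at `y > 0` of the hypoexponential distribution with distinct rates `r` and `s`,
the law of a sum of two independent exponential variables with these rates. There is no cutoff for
`y ≤ 0`, so it is to be integrated over `Ioi 0`; for `r = s` it is the junk value `0`. -/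
noncomputable def hypoexponentialPDF (r s y : ℝ) : ℝ :=
  r * s / (s - r) * (exp (-(r * y)) - exp (-(s * y)))

namespace hypoexponentialPDF

variable {r s d : ℝ}

lemma eq_mul_one_sub_exp (r s y : ℝ) :
    hypoexponentialPDF r s y =
      r * exp (-(r * y)) * (1 - exp (-((s - r) * y))) * (s / (s - r)) := by
  have h_exp : exp (-(s * y)) = exp (-(r * y)) * exp (-((s - r) * y)) := by
    rw [exp_neg_mul_mul_exp_neg_mul, add_sub_cancel]
  rw [hypoexponentialPDF, h_exp]
  ring

section Mixture

variable {ν : Measure ℝ} {f : ℝ → ℝ}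

lemma mul_eq_mixture (f : ℝ → ℝ) (r s y : ℝ) :
    f y * hypoexponentialPDF r s y =
      r * s / (s - r) * (f y * exp (-(r * y)) - f y * exp (-(s * y))) := by
  rw [hypoexponentialPDF]
  ring

lemma integrable_mul (hr : Integrable (fun y ↦ f y * exp (-(r * y))) ν)
    (hs : Integrable (fun y ↦ f y * exp (-(s * y))) ν) :
    Integrable (fun y ↦ f y * hypoexponentialPDF r s y) ν := by
  simpa only [mul_eq_mixture, Pi.sub_apply] using (hr.sub hs).const_mul (r * s / (s - r))

lemma integral_mul (hr : Integrable (fun y ↦ f y * exp (-(r * y))) ν)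
    (hs : Integrable (fun y ↦ f y * exp (-(s * y))) ν) :
    ∫ y, f y * hypoexponentialPDF r s y ∂ν =
      r * s / (s - r) * (∫ y, f y * exp (-(r * y)) ∂ν - ∫ y, f y * exp (-(s * y)) ∂ν) := by
  simp only [mul_eq_mixture]
  rw [integral_const_mul, integral_sub hr hs]

end Mixture

lemma integrableOn_id_mul (hr : 0 < r) (hs : 0 < s) :
    IntegrableOn (fun y ↦ y * hypoexponentialPDF r s y) (Ioi 0) :=
  integrable_mul (integrableOn_id_mul_exp_neg_mul_Ioi_zero hr)
    (integrableOn_id_mul_exp_neg_mul_Ioi_zero hs)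

lemma integral_id_mul (hr : 0 < r) (hs : 0 < s) (hrs : r ≠ s) :
    ∫ y in Ioi (0 : ℝ), y * hypoexponentialPDF r s y = 1 / r + 1 / s := by
  rw [integral_mul (integrableOn_id_mul_exp_neg_mul_Ioi_zero hr)
      (integrableOn_id_mul_exp_neg_mul_Ioi_zero hs),
    integral_id_mul_exp_neg_mul_Ioi_zero hr, integral_id_mul_exp_neg_mul_Ioi_zero hs]
  have : s - r ≠ 0 := sub_ne_zero.mpr hrs.symm
  field_simp
  ring

lemma integrableOn_exp_neg_mul_mul (hr : 0 < d + r) (hs : 0 < d + s) :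
    IntegrableOn (fun y ↦ exp (-(d * y)) * hypoexponentialPDF r s y) (Ioi 0) := by
  apply integrable_mul <;> simp only [exp_neg_mul_mul_exp_neg_mul]
  exacts [integrableOn_exp_neg_mul_Ioi_zero hr, integrableOn_exp_neg_mul_Ioi_zero hs]

lemma integral_exp_neg_mul_mul (hr : 0 < d + r) (hs : 0 < d + s) (hrs : r ≠ s) :
    ∫ y in Ioi (0 : ℝ), exp (-(d * y)) * hypoexponentialPDF r s y =
      r * s / ((d + r) * (d + s)) := by
  rw [integral_mul] <;> simp only [exp_neg_mul_mul_exp_neg_mul]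
  · rw [integral_exp_neg_mul_Ioi_zero hr, integral_exp_neg_mul_Ioi_zero hs]
    have : s - r ≠ 0 := sub_ne_zero.mpr hrs.symm
    field_simp
    ring
  · exact integrableOn_exp_neg_mul_Ioi_zero hr
  · exact integrableOn_exp_neg_mul_Ioi_zero hs

protected lemma integrableOn (hr : 0 < r) (hs : 0 < s) :
    IntegrableOn (hypoexponentialPDF r s) (Ioi 0) := by
  simpa using integrableOn_exp_neg_mul_mul (d := 0) (by simpa using hr) (by simpa using hs)

lemma integral_eq_one (hr : 0 < r) (hs : 0 < s) (hrs : r ≠ s) :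
    ∫ y in Ioi (0 : ℝ), hypoexponentialPDF r s y = 1 := by
  simpa [hr.ne', hs.ne'] using
    integral_exp_neg_mul_mul (d := 0) (by simpa using hr) (by simpa using hs) hrs

lemma integral_affine_add_exp_mul (a b c : ℝ) (hr : 0 < r) (hs : 0 < s) (hrs : r ≠ s)
    (hrd : 0 < d + r) (hsd : 0 < d + s) :
    ∫ y in Ioi (0 : ℝ), (a + b * y + c * exp (-(d * y))) * hypoexponentialPDF r s y =
      a + b * (1 / r + 1 / s) + c * (r * s / ((d + r) * (d + s))) := by
  have h_one := (hypoexponentialPDF.integrableOn hr hs).const_mul a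
  have h_id := (integrableOn_id_mul hr hs).const_mul b
  have h_exp := (integrableOn_exp_neg_mul_mul hrd hsd).const_mul c
  simp_rw [add_mul _ _ (hypoexponentialPDF r s _), mul_assoc _ _ (hypoexponentialPDF r s _)]
  rw [integral_add (by exact h_one.add h_id) h_exp, integral_add h_one h_id]
  simp only [integral_const_mul]
  rw [integral_eq_one hr hs hrs, integral_id_mul hr hs hrs,
    integral_exp_neg_mul_mul hrd hsd hrs, mul_one]

end hypoexponentialPDF

theorem stmt_14_general {lam1 lam2 μt μc : ℝ} (h1 : 0 < lam1) (ht : 0 < μt) (ht1 : μt ≠ lam1)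
    (hc : lam2 < μc) (hc1 : lam1 + lam2 ≠ μc) (htc : lam1 + lam2 < μt + μc) :
    ∫ y in Ioi (0 : ℝ),
        (1 / μt + y - (1 - exp (-((μt - lam1) * y))) / (μt - lam1))
          * (lam1 * exp (-(lam1 * y)) * (1 - exp (-((μc - lam1 - lam2) * y)))
              * ((μc - lam2) / (μc - lam1 - lam2)))
      = 1 / lam1 + 1 / (μc - lam2) - lam1 / (μt * (μt + μc - lam1 - lam2)) := by
  obtain ⟨s, rfl⟩ : ∃ s, μc = s + lam2 := ⟨μc - lam2, by ring⟩
  obtain ⟨d, rfl⟩ : ∃ d, μt = d + lam1 := ⟨μt - lam1, by ring⟩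
  have hs : 0 < s := by linarith
  have hsd : 0 < d + s := by linarith
  have hrs : lam1 ≠ s := fun h ↦ hc1 (by rw [h])
  have hd : d ≠ 0 := fun h ↦ ht1 (by rw [h, zero_add])
  calc
    _ = ∫ y in Ioi (0 : ℝ), ((1 / (d + lam1) - 1 / d) + 1 * y + 1 / d * exp (-(d * y)))
          * hypoexponentialPDF lam1 s y := by
      congr with y
      rw [hypoexponentialPDF.eq_mul_one_sub_exp, add_sub_cancel_right, add_sub_cancel_right,
        show s + lam2 - lam1 - lam2 = s - lam1 by ring]
      ring
    _ = (1 / (d + lam1) - 1 / d) + 1 * (1 / lam1 + 1 / s)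
          + 1 / d * (lam1 * s / ((d + lam1) * (d + s))) :=
      hypoexponentialPDF.integral_affine_add_exp_mul _ _ _ h1 hs hrs ht hsd
    _ = 1 / lam1 + 1 / (s + lam2 - lam2)
          - lam1 / ((d + lam1) * (d + lam1 + (s + lam2) - lam1 - lam2)) := by
      rw [add_sub_cancel_right, show d + lam1 + (s + lam2) - lam1 - lam2 = d + s by ring]
      field_simp
      ring

/-- Equation (46): E[X_{i,n} | L_n] for the multi-source computation queue. -/
theorem stmt_14 (lam1 lam2 μt μc : ℝ) (h1 : 0 < lam1) (ht : lam1 < μt)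
    (h2 : 0 ≤ lam2) (hc : lam1 + lam2 < μc) :
    ∫ y in Ioi (0:ℝ),
        (1 / μt + y - (1 - exp (-((μt - lam1) * y))) / (μt - lam1))
          * (lam1 * exp (-(lam1 * y)) * (1 - exp (-((μc - lam1 - lam2) * y)))
              * ((μc - lam2) / (μc - lam1 - lam2)))
      = 1 / lam1 + 1 / (μc - lam2) - lam1 / (μt * (μt + μc - lam1 - lam2)) :=
  stmt_14_general h1 (h1.trans ht) ht.ne' (by linarith) hc.ne (by linarith)
end

section
/- Let λ₁, λ₂, μ_t, μ_c be real numbers with 0 < λ₁ < μ_t, λ₂ ≥ 0 and λ₁ + λ₂ < μ_c, and set λ = λ₁ + λ₂. Define P_I = λ₁/(μ_c−λ₂), P_L = (μ_c−λ)/(μ_c−λ₂), E_XI = 1/(μ_c−λ₂) − λ₁/(μ_t(μ_t−λ₁)) + (μ_c−λ₂)/((μ_t−λ₁)(μ_t+μ_c−λ)), E_WI = 1/(μ_c−λ), E_XWI = (λ₂/μ_c)·∫₀^∞ y·(1/μ_t + y − (1 − exp(−(μ_t−λ₁)y))/(μ_t−λ₁))·(μ_c−λ₂)·exp(−(μ_c−λ₂)y)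 dy, E_XL = 1/λ₁ + 1/(μ_c−λ₂) − λ₁/(μ_t(μ_t+μ_c−λ)), and E_WL = λ₂/(μ_c(μ_c−λ₂)). Then λ₁·( λ₁/(μ_t²(μ_t−λ₁)) + 1/(λ₁μ_t) + P_I·(E_XI·E_WI + E_XWI) + P_L·E_XL·E_WL + 1/(λ₁μ_c) + 1/λ₁² ) = λ₁²/(μ_t²(μ_t−λ₁)) + 1/μ_t + 1/μ_c + (λ₁²/((μ_c−λ)(μ_c−λ₂)))·[ 1/(μ_c−λ₂) − λ₁/(μ_t(μ_t−λ₁)) + (μ_c−λ₂)/((μ_t−λ₁)(μ_t+μ_c−λ)) ] + (λ₁²λ₂/(μ_c(μ_c−λ₂)))·[ 2/(μ_c−λ₂)² − λ₁/(μ_t(μ_t−λ₁)(μ_c−λ₂)) + (μ_c−λ₂)/((μ_t−λ₁)(μ_t+μ_c−λ)²) ] + (λ₁λ₂(μ_c−λ)/(μ_c(μ_c−λ₂)²))·[ 1/λ₁ − λ₁/(μ_t(μ_t+μ_c−λ)) + 1/(μ_c−λ₂) ] + 1/λ₁. -/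
open MeasureTheory Real Set

/-!
Against the density `c * exp (-(c * y))`, with `c = μc - lam2`, the cross moment `E_XWI` is a linear
combination of Gamma integrals: the polynomial terms keep the rate `c`, while the transient
`exp (-((μt - lam1) * y))` tilts it to `(μt - lam1) + c = μt + μc - lam`, the rate whose square
appears in the closed form.
-/

open scoped Nat

section GammaIntegrals

variable (n : ℕ) {a c : ℝ}

lemma integral_pow_mul_exp_neg_mul_Ioi (hc : 0 < c) :
    ∫ y in Ioi (0 : ℝ), y ^ n * exp (-(c * y)) = n ! / c ^ (n + 1) := by
  have gamma_integral := integral_rpow_mul_exp_neg_mul_Ioi (a := n + 1) (by positivity) hc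
  simp only [add_sub_cancel_right, rpow_natCast, Gamma_nat_eq_factorial] at gamma_integral
  rw [gamma_integral, ← Nat.cast_succ, rpow_natCast, one_div_pow, one_div_mul_eq_div]

lemma integrableOn_pow_mul_exp_neg_mul_Ioi (hc : 0 < c) :
    IntegrableOn (fun y : ℝ ↦ y ^ n * exp (-(c * y))) (Ioi 0) :=
  .of_integral_ne_zero (by rw [integral_pow_mul_exp_neg_mul_Ioi n hc]; positivity)

lemma integral_pow_mul_add_sub_exp_mul_exp_density (b : ℝ) (hc : 0 < c) (hac : 0 < a + c) :
    ∫ y in Ioi (0 : ℝ), y ^ n * (b + y - (1 - exp (-(a * y))) / a) * (c * exp (-(c * y))) =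
      (b - 1 / a) * (n ! / c ^ n) + (n + 1)! / c ^ (n + 1)
        + c / a * (n ! / (a + c) ^ (n + 1)) := by
  have expand (y : ℝ) :
      y ^ n * (b + y - (1 - exp (-(a * y))) / a) * (c * exp (-(c * y))) =
        c * (b - 1 / a) * (y ^ n * exp (-(c * y))) + c * (y ^ (n + 1) * exp (-(c * y)))
          + c / a * (y ^ n * exp (-((a + c) * y))) := by
    rw [show -((a + c) * y) = -(a * y) + -(c * y) by ring, exp_add]
    ring
  have integrable_const := (integrableOn_pow_mul_exp_neg_mul_Ioi n hc).const_mul (c * (b - 1 / a))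
  have integrable_linear := (integrableOn_pow_mul_exp_neg_mul_Ioi (n + 1) hc).const_mul c
  have integrable_tilted := (integrableOn_pow_mul_exp_neg_mul_Ioi n hac).const_mul (c / a)
  simp_rw [expand]
  rw [integral_add (integrable_const.fun_add integrable_linear) integrable_tilted,
    integral_add integrable_const integrable_linear]
  simp only [integral_const_mul, integral_pow_mul_exp_neg_mul_Ioi, hc, hac]
  field_simp
  ring

end GammaIntegrals

lemma crossMoment_integral_eq {l μ c : ℝ} (hμ : μ ≠ 0) (hl : l ≠ μ)
    (hc : 0 < c) (hlc : 0 < μ - l + c) :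
    ∫ y in Ioi (0 : ℝ),
        y * (1 / μ + y - (1 - exp (-((μ - l) * y))) / (μ - l)) * (c * exp (-(c * y))) =
      2 / c ^ 2 - l / (μ * (μ - l) * c) + c / ((μ - l) * (μ - l + c) ^ 2) := by
  have hμl : μ - l ≠ 0 := sub_ne_zero.2 hl.symm
  have moments := integral_pow_mul_add_sub_exp_mul_exp_density 1 (1 / μ) hc hlc
  simp only [pow_one, Nat.factorial, Nat.reduceAdd] at moments
  rw [moments]
  push_cast
  field_simp
  ring

theorem stmt_15_general (lam1 lam2 μt μc : ℝ) (h1 : lam1 ≠ 0) (ht0 : μt ≠ 0) (hc0 : μc ≠ 0)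
    (ht : lam1 ≠ μt) (hc : lam1 + lam2 ≠ μc) (h2 : lam2 < μc) (htc : lam1 + lam2 < μt + μc)
    (lam : ℝ) (hlam : lam = lam1 + lam2)
    (P_I P_L E_XI E_WI E_XWI E_XL E_WL : ℝ)
    (hPI : P_I = lam1 / (μc - lam2))
    (hPL : P_L = (μc - lam) / (μc - lam2))
    (hEXI : E_XI = 1 / (μc - lam2) - lam1 / (μt * (μt - lam1))
      + (μc - lam2) / ((μt - lam1) * (μt + μc - lam)))
    (hEWI : E_WI = 1 / (μc - lam))
    (hEXWI : E_XWI = lam2 / μc * ∫ y in Ioi (0 : ℝ),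
      y * (1 / μt + y - (1 - exp (-((μt - lam1) * y))) / (μt - lam1))
        * ((μc - lam2) * exp (-((μc - lam2) * y))))
    (hEXL : E_XL = 1 / lam1 + 1 / (μc - lam2) - lam1 / (μt * (μt + μc - lam)))
    (hEWL : E_WL = lam2 / (μc * (μc - lam2))) :
    lam1 * (lam1 / (μt ^ 2 * (μt - lam1)) + 1 / (lam1 * μt)
        + P_I * (E_XI * E_WI + E_XWI) + P_L * (E_XL * E_WL)
        + 1 / (lam1 * μc) + 1 / lam1 ^ 2)
      = lam1 ^ 2 / (μt ^ 2 * (μt - lam1)) + 1 / μt + 1 / μc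
        + lam1 ^ 2 / ((μc - lam) * (μc - lam2)) *
            (1 / (μc - lam2) - lam1 / (μt * (μt - lam1))
              + (μc - lam2) / ((μt - lam1) * (μt + μc - lam)))
        + lam1 ^ 2 * lam2 / (μc * (μc - lam2)) *
            (2 / (μc - lam2) ^ 2 - lam1 / (μt * (μt - lam1) * (μc - lam2))
              + (μc - lam2) / ((μt - lam1) * (μt + μc - lam) ^ 2))
        + lam1 * lam2 * (μc - lam) / (μc * (μc - lam2) ^ 2) *
            (1 / lam1 - lam1 / (μt * (μt + μc - lam)) + 1 / (μc - lam2))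
        + 1 / lam1 := by
  have tilted_rate : μt - lam1 + (μc - lam2) = μt + μc - lam := by rw [hlam]; ring
  have hμt_lam1 : μt - lam1 ≠ 0 := sub_ne_zero.2 ht.symm
  have hμc_lam2 : μc - lam2 ≠ 0 := (sub_pos.2 h2).ne'
  have hμc_lam : μc - lam ≠ 0 := by rw [hlam]; exact sub_ne_zero.2 hc.symm
  have E_XL_reordered :
      1 / lam1 - lam1 / (μt * (μt + μc - lam)) + 1 / (μc - lam2) = E_XL := by rw [hEXL]; ring
  rw [crossMoment_integral_eq ht0 ht (sub_pos.2 h2) (by linarith), tilted_rate] at hEXWI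
  rw [← hEXI, E_XL_reordered, hPI, hPL, hEWI, hEXWI, hEWL]
  field_simp
  ring

/-- Proposition 3: closed form of the timeliness of information at fog tier
(M/M/1 followed by a multi-source M/M/1). -/
theorem stmt_15 (lam1 lam2 μt μc : ℝ) (h1 : 0 < lam1) (ht : lam1 < μt)
    (h2 : 0 ≤ lam2) (hc : lam1 + lam2 < μc)
    (lam : ℝ) (hlam : lam = lam1 + lam2)
    (P_I P_L E_XI E_WI E_XWI E_XL E_WL : ℝ)
    (hPI : P_I = lam1 / (μc - lam2))
    (hPL : P_L = (μc - lam) / (μc - lam2))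
    (hEXI : E_XI = 1 / (μc - lam2) - lam1 / (μt * (μt - lam1))
      + (μc - lam2) / ((μt - lam1) * (μt + μc - lam)))
    (hEWI : E_WI = 1 / (μc - lam))
    (hEXWI : E_XWI = lam2 / μc * ∫ y in Ioi (0:ℝ),
      y * (1 / μt + y - (1 - exp (-((μt - lam1) * y))) / (μt - lam1))
        * ((μc - lam2) * exp (-((μc - lam2) * y))))
    (hEXL : E_XL = 1 / lam1 + 1 / (μc - lam2) - lam1 / (μt * (μt + μc - lam)))
    (hEWL : E_WL = lam2 / (μc * (μc - lam2))) :
    lam1 * (lam1 / (μt ^ 2 * (μt - lam1)) + 1 / (lam1 * μt)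
        + P_I * (E_XI * E_WI + E_XWI) + P_L * (E_XL * E_WL)
        + 1 / (lam1 * μc) + 1 / lam1 ^ 2)
      = lam1 ^ 2 / (μt ^ 2 * (μt - lam1)) + 1 / μt + 1 / μc
        + lam1 ^ 2 / ((μc - lam) * (μc - lam2)) *
            (1 / (μc - lam2) - lam1 / (μt * (μt - lam1))
              + (μc - lam2) / ((μt - lam1) * (μt + μc - lam)))
        + lam1 ^ 2 * lam2 / (μc * (μc - lam2)) *
            (2 / (μc - lam2) ^ 2 - lam1 / (μt * (μt - lam1) * (μc - lam2))
              + (μc - lam2) / ((μt - lam1) * (μt + μc - lam) ^ 2))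
        + lam1 * lam2 * (μc - lam) / (μc * (μc - lam2) ^ 2) *
            (1 / lam1 - lam1 / (μt * (μt + μc - lam)) + 1 / (μc - lam2))
        + 1 / lam1 :=
  stmt_15_general lam1 lam2 μt μc h1.ne' (by linarith) (by linarith) ht.ne hc.ne
    (by linarith) (by linarith) lam hlam P_I P_L E_XI E_WI E_XWI E_XL E_WL
    hPI hPL hEXI hEWI hEXWI hEXL hEWL
end
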